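/- arXiv:1010.4905 — 4 statements merged into one kernel-verified Lean document; each statement's English description precedes it below -/
import Mathlib

section
/- Let f be a real-valued harmonic function on the open unit disk U = {z ∈ ℂ : |z| < 1} with values in the open interval (-1, 1). Then for every z ∈ U, the gradient of f satisfies the sharp inequality |∇f(z)| ≤ (4/π) · (1 - f(z)²)/(1 - |z|²). -/
open Complex Metric Real

/-!
A harmonic `f` on the disk is the real part of a holomorphic `F`, and `|∇f| = |F'|`. If `|f| < 1`,
then `h = tan (π F / 4)` maps the disk into itself, because `|cos w|² - |sin w|² = cos (2 Re w)`.
By the same identity, the Schwarz–Pick inequality `|h'(z)| ≤ (1 - |h(z)|²) / (1 - |z|²)` for `h`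
reads `(π / 4) |F'(z)| ≤ cos (π f(z) / 2) / (1 - |z|²)`, and `cos (π t / 2) ≤ 1 - t²` on `[-1, 1]`.
-/

open InnerProductSpace Laplacian Set Topology
open scoped ComplexConjugate

lemma one_sub_sq_norm_pos {E : Type*} [SeminormedAddCommGroup E] {x : E} (hx : ‖x‖ < 1) :
    0 < 1 - ‖x‖ ^ 2 :=
  sub_pos.mpr (pow_lt_one₀ (norm_nonneg x) hx two_ne_zero)

section DiscShift

/-- The automorphism of the unit disk that sends `0` to `a`, for `‖a‖ < 1`; it reduces the
Schwarz–Pick inequality to the Schwarz lemma at the origin. Its inverse is `discShift (-a)`. -/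
noncomputable def discShift (a w : ℂ) : ℂ :=
  (w + a) / (1 + conj a * w)

variable {a w : ℂ}

@[simp]
lemma discShift_zero (a : ℂ) : discShift a 0 = a := by
  simp [discShift]

@[simp]
lemma discShift_neg_self (a : ℂ) : discShift (-a) a = 0 := by
  simp [discShift]

lemma sq_norm_one_add_conj_mul_sub_sq_norm_add (a w : ℂ) :
    ‖1 + conj a * w‖ ^ 2 - ‖w + a‖ ^ 2 = (1 - ‖a‖ ^ 2) * (1 - ‖w‖ ^ 2) := by
  simp only [← normSq_eq_norm_sq, normSq_apply, add_re, add_im, mul_re, mul_im, conj_re, conj_im,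
    one_re, one_im]
  ring

lemma norm_add_lt_norm_one_add_conj_mul (ha : ‖a‖ < 1) (hw : ‖w‖ < 1) :
    ‖w + a‖ < ‖1 + conj a * w‖ := by
  refine lt_of_pow_lt_pow_left₀ 2 (norm_nonneg _) (sub_pos.mp ?_)
  rw [sq_norm_one_add_conj_mul_sub_sq_norm_add]
  exact mul_pos (one_sub_sq_norm_pos ha) (one_sub_sq_norm_pos hw)

lemma one_add_conj_mul_ne_zero (ha : ‖a‖ < 1) (hw : ‖w‖ < 1) : 1 + conj a * w ≠ 0 :=
  norm_pos_iff.mp ((norm_nonneg _).trans_lt (norm_add_lt_norm_one_add_conj_mul ha hw))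

lemma mapsTo_discShift (ha : ‖a‖ < 1) : MapsTo (discShift a) (ball 0 1) (ball 0 1) := by
  intro w hw
  rw [mem_ball_zero_iff] at hw ⊢
  have hlt := norm_add_lt_norm_one_add_conj_mul ha hw
  rw [discShift, norm_div, div_lt_one ((norm_nonneg _).trans_lt hlt)]
  exact hlt

lemma hasDerivAt_discShift (hw : 1 + conj a * w ≠ 0) :
    HasDerivAt (discShift a) (((1 - ‖a‖ ^ 2 : ℝ) : ℂ) / (1 + conj a * w) ^ 2) w := by
  have hnum : HasDerivAt (fun w : ℂ ↦ w + a) 1 w := (hasDerivAt_id w).add_const a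
  have hden : HasDerivAt (fun w : ℂ ↦ 1 + conj a * w) (conj a * 1) w :=
    ((hasDerivAt_id w).const_mul _).const_add 1
  refine (hnum.div hden hw).congr_deriv ?_
  push_cast
  rw [← mul_conj']
  ring

lemma hasDerivAt_discShift_zero (a : ℂ) :
    HasDerivAt (discShift a) ((1 - ‖a‖ ^ 2 : ℝ) : ℂ) 0 := by
  simpa using hasDerivAt_discShift (a := a) (w := 0) (by simp)

lemma hasDerivAt_discShift_neg_self (ha : ‖a‖ < 1) :
    HasDerivAt (discShift (-a)) ((1 - ‖a‖ ^ 2 : ℝ) : ℂ)⁻¹ a := by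
  have hden : 1 + conj (-a) * a = ((1 - ‖a‖ ^ 2 : ℝ) : ℂ) := by
    rw [map_neg, neg_mul, conj_mul']
    push_cast
    ring
  have hne := one_add_conj_mul_ne_zero (a := -a) (by simpa using ha) ha
  refine (hasDerivAt_discShift hne).congr_deriv ?_
  rw [hden] at hne ⊢
  rw [norm_neg]
  field_simp

lemma differentiableOn_discShift (ha : ‖a‖ < 1) :
    DifferentiableOn ℂ (discShift a) (ball 0 1) := fun _ hw ↦
  (hasDerivAt_discShift
    (one_add_conj_mul_ne_zero ha (by simpa using hw))).differentiableAt.differentiableWithinAt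

end DiscShift

theorem norm_deriv_le_div_of_mapsTo_unit_ball {h : ℂ → ℂ} {z : ℂ}
    (hd : DifferentiableOn ℂ h (ball 0 1)) (h_maps : MapsTo h (ball 0 1) (ball 0 1))
    (hz : z ∈ ball (0 : ℂ) 1) :
    ‖deriv h z‖ ≤ (1 - ‖h z‖ ^ 2) / (1 - ‖z‖ ^ 2) := by
  have hz_norm : ‖z‖ < 1 := by simpa using hz
  have hhz_norm : ‖h z‖ < 1 := by simpa using h_maps hz
  have hneg_norm : ‖-h z‖ < 1 := by simpa using hhz_norm
  set g : ℂ → ℂ := discShift (-h z) ∘ h ∘ discShift z with hg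
  have hg_zero : g 0 = 0 := by simp [hg]
  have hg_maps : MapsTo g (ball 0 1) (ball 0 1) :=
    (mapsTo_discShift hneg_norm).comp (h_maps.comp (mapsTo_discShift hz_norm))
  have hg_diff : DifferentiableOn ℂ g (ball 0 1) :=
    (differentiableOn_discShift hneg_norm).comp
      (hd.comp (differentiableOn_discShift hz_norm) (mapsTo_discShift hz_norm))
      (h_maps.comp (mapsTo_discShift hz_norm))
  have hg_deriv : HasDerivAt g
      (((1 - ‖h z‖ ^ 2 : ℝ) : ℂ)⁻¹ * (deriv h z * ((1 - ‖z‖ ^ 2 : ℝ) : ℂ))) 0 := by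
    have hh : HasDerivAt h (deriv h z) (discShift z 0) := by
      simpa using (hd.differentiableAt (isOpen_ball.mem_nhds hz)).hasDerivAt
    refine HasDerivAt.comp 0 ?_ (hh.comp 0 (hasDerivAt_discShift_zero z))
    simpa using hasDerivAt_discShift_neg_self hhz_norm
  have schwarz : ‖deriv g 0‖ ≤ 1 :=
    norm_deriv_le_one_of_mapsTo_ball hg_diff
      (by simpa [hg_zero] using hg_maps.mono_right ball_subset_closedBall) one_pos
  have hz_pos := one_sub_sq_norm_pos hz_norm
  have hhz_pos := one_sub_sq_norm_pos hhz_norm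
  rw [hg_deriv.deriv, norm_mul, norm_inv, norm_mul, Complex.norm_of_nonneg hz_pos.le,
    Complex.norm_of_nonneg hhz_pos.le, inv_mul_le_one₀ hhz_pos] at schwarz
  exact (le_div_iff₀ hz_pos).mpr schwarz

section Strip

variable {w : ℂ}

lemma sq_norm_cos_sub_sq_norm_sin (w : ℂ) :
    ‖Complex.cos w‖ ^ 2 - ‖Complex.sin w‖ ^ 2 = Real.cos (2 * w.re) := by
  apply ofReal_injective
  push_cast
  rw [← mul_conj', ← mul_conj', ← Complex.cos_conj, ← Complex.sin_conj, ← Complex.cos_add,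
    add_conj]
  push_cast
  rfl

lemma cos_two_mul_pos_of_mem_Ioo {x : ℝ} (hx : x ∈ Ioo (-(π / 4)) (π / 4)) :
    0 < Real.cos (2 * x) :=
  Real.cos_pos_of_mem_Ioo ⟨by linarith [hx.1], by linarith [hx.2]⟩

lemma norm_sin_lt_norm_cos (hw : w.re ∈ Ioo (-(π / 4)) (π / 4)) :
    ‖Complex.sin w‖ < ‖Complex.cos w‖ := by
  refine lt_of_pow_lt_pow_left₀ 2 (norm_nonneg _) (sub_pos.mp ?_)
  rw [sq_norm_cos_sub_sq_norm_sin]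
  exact cos_two_mul_pos_of_mem_Ioo hw

lemma cos_ne_zero_of_re_mem_Ioo (hw : w.re ∈ Ioo (-(π / 4)) (π / 4)) : Complex.cos w ≠ 0 :=
  norm_pos_iff.mp ((norm_nonneg _).trans_lt (norm_sin_lt_norm_cos hw))

lemma norm_tan_lt_one (hw : w.re ∈ Ioo (-(π / 4)) (π / 4)) : ‖Complex.tan w‖ < 1 := by
  rw [Complex.tan, norm_div, div_lt_one (norm_pos_iff.mpr (cos_ne_zero_of_re_mem_Ioo hw))]
  exact norm_sin_lt_norm_cos hw

lemma one_sub_sq_norm_tan (hw : Complex.cos w ≠ 0) :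
    1 - ‖Complex.tan w‖ ^ 2 = Real.cos (2 * w.re) / ‖Complex.cos w‖ ^ 2 := by
  rw [← sq_norm_cos_sub_sq_norm_sin, Complex.tan, norm_div]
  have := norm_ne_zero_iff.mpr hw
  field_simp

theorem norm_deriv_le_cos_div_of_re_mem_Ioo_pi_div_four {F : ℂ → ℂ} {z : ℂ}
    (hF : DifferentiableOn ℂ F (ball 0 1))
    (hF_re : ∀ w ∈ ball (0 : ℂ) 1, (F w).re ∈ Ioo (-(π / 4)) (π / 4))
    (hz : z ∈ ball (0 : ℂ) 1) :
    ‖deriv F z‖ ≤ Real.cos (2 * (F z).re) / (1 - ‖z‖ ^ 2) := by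
  have hcos : ∀ w ∈ ball (0 : ℂ) 1, Complex.cos (F w) ≠ 0 := fun w hw ↦
    cos_ne_zero_of_re_mem_Ioo (hF_re w hw)
  have htan_maps : MapsTo (Complex.tan ∘ F) (ball 0 1) (ball 0 1) := fun w hw ↦
    mem_ball_zero_iff.mpr (norm_tan_lt_one (hF_re w hw))
  have htan_diff : DifferentiableOn ℂ (Complex.tan ∘ F) (ball 0 1) := fun w hw ↦
    (Complex.hasDerivAt_tan (hcos w hw)).differentiableAt.comp_differentiableWithinAt w (hF w hw)
  have htan_deriv : deriv (Complex.tan ∘ F) z = 1 / Complex.cos (F z) ^ 2 * deriv F z :=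
    ((Complex.hasDerivAt_tan (hcos z hz)).comp z
      (hF.differentiableAt (isOpen_ball.mem_nhds hz)).hasDerivAt).deriv
  have schwarz_pick := norm_deriv_le_div_of_mapsTo_unit_ball htan_diff htan_maps hz
  have hcos_pos : 0 < ‖Complex.cos (F z)‖ ^ 2 := by
    have := norm_pos_iff.mpr (hcos z hz)
    positivity
  rw [htan_deriv, Function.comp_apply, one_sub_sq_norm_tan (hcos z hz), norm_mul, norm_div,
    norm_one, norm_pow, div_right_comm, one_div_mul_eq_div] at schwarz_pick
  exact (div_le_div_iff_of_pos_right hcos_pos).mp schwarz_pick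

theorem norm_deriv_le_cos_div_of_re_mem_Ioo_one {F : ℂ → ℂ} {z : ℂ}
    (hF : DifferentiableOn ℂ F (ball 0 1))
    (hF_re : ∀ w ∈ ball (0 : ℂ) 1, (F w).re ∈ Ioo (-1) 1) (hz : z ∈ ball (0 : ℂ) 1) :
    ‖deriv F z‖ ≤ 4 / π * Real.cos (π / 2 * (F z).re) / (1 - ‖z‖ ^ 2) := by
  have hpi : 0 < π / 4 := by positivity
  have hscaled_re : ∀ w ∈ ball (0 : ℂ) 1,
      (((π / 4 : ℝ) : ℂ) * F w).re ∈ Ioo (-(π / 4)) (π / 4) := fun w hw ↦ by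
    rw [re_ofReal_mul]
    constructor <;> nlinarith [(hF_re w hw).1, (hF_re w hw).2]
  have hscaled := norm_deriv_le_cos_div_of_re_mem_Ioo_pi_div_four (hF.const_mul _) hscaled_re hz
  have hangle : 2 * (π / 4 * (F z).re) = π / 2 * (F z).re := by ring
  rw [deriv_const_mul _ (hF.differentiableAt (isOpen_ball.mem_nhds hz)), norm_mul,
    Complex.norm_of_nonneg hpi.le, re_ofReal_mul, hangle, ← le_div_iff₀' hpi] at hscaled
  calc ‖deriv F z‖
      ≤ Real.cos (π / 2 * (F z).re) / (1 - ‖z‖ ^ 2) / (π / 4) := hscaled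
    _ = 4 / π * Real.cos (π / 2 * (F z).re) / (1 - ‖z‖ ^ 2) := by ring

end Strip

section Harmonic

lemma hasGradientAt_re {F : ℂ → ℂ} {F' z : ℂ} (hF : HasDerivAt F F' z) :
    HasGradientAt (fun w ↦ (F w).re) (conj F') z := by
  rw [hasGradientAt_iff_hasFDerivAt]
  refine (reCLM.hasFDerivAt.comp z (hF.hasFDerivAt.restrictScalars ℝ)).congr_fderiv ?_
  ext
  simp

theorem norm_gradient_le_cos_div_of_harmonicOnNhd {f : ℂ → ℝ} {z : ℂ}
    (hf : HarmonicOnNhd f (ball 0 1)) (hf_range : MapsTo f (ball 0 1) (Ioo (-1) 1))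
    (hz : z ∈ ball (0 : ℂ) 1) :
    ‖gradient f z‖ ≤ 4 / π * Real.cos (π / 2 * f z) / (1 - ‖z‖ ^ 2) := by
  obtain ⟨F, hF_analytic, hF_re⟩ := hf.exists_analyticOnNhd_ball_re_eq
  have hF : DifferentiableOn ℂ F (ball 0 1) := hF_analytic.differentiableOn
  have hgrad : gradient f z = conj (deriv F z) := by
    have hre : (fun w ↦ (F w).re) =ᶠ[𝓝 z] f := hF_re.eventuallyEq_of_mem (isOpen_ball.mem_nhds hz)
    rw [← hre.gradient_eq]
    exact (hasGradientAt_re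
      (hF.differentiableAt (isOpen_ball.mem_nhds hz)).hasDerivAt).gradient
  rw [hgrad, norm_conj, ← show (F z).re = f z from hF_re hz]
  exact norm_deriv_le_cos_div_of_re_mem_Ioo_one hF
    (fun w hw ↦ by simpa only [← hF_re hw] using hf_range hw) hz

variable {E : Type*} [NormedAddCommGroup E] [NormedSpace ℝ E] {f : ℂ → E}

lemma laplacian_eq_fderiv_fderiv_complexPlane {z : ℂ} (hf : ContDiffAt ℝ 2 f z) :
    Δ f z = fderiv ℝ (fun w ↦ fderiv ℝ f w 1) z 1
      + fderiv ℝ (fun w ↦ fderiv ℝ f w Complex.I) z Complex.I := by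
  have hf' : DifferentiableAt ℝ (fderiv ℝ f) z :=
    (hf.fderiv_right (m := 1) (by norm_num)).differentiableAt one_ne_zero
  simp [laplacian_eq_iteratedFDeriv_complexPlane, iteratedFDeriv_two_apply,
    fderiv_clm_apply hf' (differentiableAt_const _)]

lemma harmonicOnNhd_of_fderiv_fderiv_eq_zero {s : Set ℂ} (hs : IsOpen s)
    (hf : ContDiffOn ℝ 2 f s)
    (hf_harm : ∀ z ∈ s, fderiv ℝ (fun w ↦ fderiv ℝ f w 1) z 1
      + fderiv ℝ (fun w ↦ fderiv ℝ f w Complex.I) z Complex.I = 0) :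
    HarmonicOnNhd f s := by
  have hf_at : ∀ z ∈ s, ContDiffAt ℝ 2 f z := fun z hz ↦ hf.contDiffAt (hs.mem_nhds hz)
  refine fun z hz ↦ ⟨hf_at z hz, ?_⟩
  filter_upwards [hs.mem_nhds hz] with w hw
  rw [laplacian_eq_fderiv_fderiv_complexPlane (hf_at w hw), hf_harm w hw, Pi.zero_apply]

end Harmonic

-- The chord of the concave function `sin` over `[0, π / 4]`.
lemma mul_sqrt_two_div_two_le_sin {t : ℝ} (ht_nonneg : 0 ≤ t) (ht_le : t ≤ 1) :
    t * (√2 / 2) ≤ Real.sin (t * (π / 4)) := by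
  have hconcave := strictConcaveOn_sin_Icc.concaveOn.2 (left_mem_Icc.mpr pi_pos.le)
    (show π / 4 ∈ Icc 0 π from ⟨by positivity, by linarith [pi_pos]⟩)
    (sub_nonneg.mpr ht_le) ht_nonneg (by ring)
  simpa using hconcave

lemma cos_pi_div_two_mul_le_one_sub_sq {t : ℝ} (ht : |t| ≤ 1) :
    Real.cos (π / 2 * t) ≤ 1 - t ^ 2 := by
  have habs : Real.cos (π / 2 * t) = Real.cos (2 * (|t| * (π / 4))) := by
    rw [← Real.cos_abs (π / 2 * t), abs_mul, abs_of_pos (by positivity : 0 < π / 2)]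
    ring_nf
  calc Real.cos (π / 2 * t)
      = 1 - 2 * Real.sin (|t| * (π / 4)) ^ 2 := by
        rw [habs, Real.cos_two_mul, Real.cos_sq']
        ring
    _ ≤ 1 - 2 * (|t| * (√2 / 2)) ^ 2 := by
        gcongr
        exact mul_sqrt_two_div_two_le_sin (abs_nonneg t) ht
    _ = 1 - t ^ 2 := by
        rw [mul_pow, div_pow, sq_abs, Real.sq_sqrt zero_le_two]
        ring

/-- **Sharp Schwarz lemma for real harmonic functions** (Kalaj–Vuorinen, Theorem 1).
If `f` is a real harmonic function of the unit disk into `(-1, 1)`, then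
`|∇f(z)| ≤ (4/π) (1 - f(z)²)/(1 - |z|²)` for every `z` in the disk. -/
theorem grad_bound_real_harmonic
    (f : ℂ → ℝ)
    (hf_smooth : ContDiffOn ℝ 2 f (ball (0 : ℂ) 1))
    (hf_harm : ∀ z ∈ ball (0 : ℂ) 1,
      fderiv ℝ (fun w => fderiv ℝ f w 1) z 1
        + fderiv ℝ (fun w => fderiv ℝ f w Complex.I) z Complex.I = 0)
    (hf_range : ∀ z ∈ ball (0 : ℂ) 1, f z ∈ Set.Ioo (-1 : ℝ) 1) :
    ∀ z ∈ ball (0 : ℂ) 1,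
      ‖gradient f z‖ ≤ (4 / π) * (1 - (f z) ^ 2) / (1 - ‖z‖ ^ 2) := by
  intro z hz
  have hf : HarmonicOnNhd f (ball 0 1) :=
    harmonicOnNhd_of_fderiv_fderiv_eq_zero isOpen_ball hf_smooth hf_harm
  have hz_pos : 0 < 1 - ‖z‖ ^ 2 := one_sub_sq_norm_pos (by simpa using hz)
  have hfz : |f z| ≤ 1 := (abs_lt.mpr (hf_range z hz)).le
  calc ‖gradient f z‖
      ≤ 4 / π * Real.cos (π / 2 * f z) / (1 - ‖z‖ ^ 2) :=
        norm_gradient_le_cos_div_of_harmonicOnNhd hf hf_range hz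
    _ ≤ 4 / π * (1 - f z ^ 2) / (1 - ‖z‖ ^ 2) := by
        gcongr
        exact cos_pi_div_two_mul_le_one_sub_sq hfz
end

section
/- Let f : U → U be a complex-valued harmonic function of the open unit disk U = {z ∈ ℂ : |z| < 1} into itself with f(0) = 0. Then |f(z)| ≤ (4/π) · arctan(|z|) for every z ∈ U. -/
open Complex Metric Real

/-!
Composing with a norming functional reduces the bound to a real harmonic function, scaled so that
`|u| ≤ π / 4` and `u c = 0`. Such a `u` is the real part of a holomorphic `F` with `F c = 0`. The
tangent maps the strip `|re w| ≤ π / 4` into the closed unit disk, so the holomorphic Schwarz lemma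
applies to `tan ∘ F`, and `tan |re w| ≤ |tan w|` on the strip turns the resulting bound on
`tan (F z)` into one on `u z`.
-/

open InnerProductSpace (HarmonicOnNhd)
open Set (MapsTo)

theorem norm_sin_sq (z : ℂ) : ‖Complex.sin z‖ ^ 2 = Real.sin z.re ^ 2 + Real.sinh z.im ^ 2 := by
  have sin_eq : Complex.sin z =
      ⟨Real.sin z.re * Real.cosh z.im, Real.cos z.re * Real.sinh z.im⟩ := by
    rw [Complex.sin_eq, Complex.mk_eq_add_mul_I]
    push_cast
    rfl
  rw [Complex.sq_norm, sin_eq, Complex.normSq_mk]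
  linear_combination Real.sin z.re ^ 2 * Real.cosh_sq z.im +
    Real.sinh z.im ^ 2 * Real.sin_sq_add_cos_sq z.re

theorem norm_cos_sq (z : ℂ) : ‖Complex.cos z‖ ^ 2 = Real.cos z.re ^ 2 + Real.sinh z.im ^ 2 := by
  have cos_eq : Complex.cos z =
      ⟨Real.cos z.re * Real.cosh z.im, -(Real.sin z.re * Real.sinh z.im)⟩ := by
    rw [Complex.cos_eq, Complex.mk_eq_add_mul_I]
    push_cast
    ring
  rw [Complex.sq_norm, cos_eq, Complex.normSq_mk]
  linear_combination Real.cos z.re ^ 2 * Real.cosh_sq z.im +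
    Real.sinh z.im ^ 2 * Real.sin_sq_add_cos_sq z.re

theorem norm_tan_sq (z : ℂ) :
    ‖Complex.tan z‖ ^ 2 =
      (Real.sin z.re ^ 2 + Real.sinh z.im ^ 2) / (Real.cos z.re ^ 2 + Real.sinh z.im ^ 2) := by
  rw [Complex.tan_eq_sin_div_cos, norm_div, div_pow, norm_sin_sq, norm_cos_sq]

theorem sin_sq_le_cos_sq_of_abs_le_pi_div_four {x : ℝ} (hx : |x| ≤ π / 4) :
    Real.sin x ^ 2 ≤ Real.cos x ^ 2 := by
  obtain ⟨hx_ge, hx_le⟩ := abs_le.1 hx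
  have cos_two_mul_nonneg : 0 ≤ Real.cos (2 * x) :=
    Real.cos_nonneg_of_neg_pi_div_two_le_of_le (by linarith) (by linarith)
  rwa [Real.cos_two_mul', sub_nonneg] at cos_two_mul_nonneg

theorem norm_tan_le_one_of_abs_re_le_pi_div_four {z : ℂ} (hz : |z.re| ≤ π / 4) :
    ‖Complex.tan z‖ ≤ 1 := by
  rw [← sq_le_one_iff₀ (norm_nonneg _), norm_tan_sq]
  have := sin_sq_le_cos_sq_of_abs_le_pi_div_four hz
  exact div_le_one_of_le₀ (by gcongr) (by positivity)

theorem abs_tan_re_le_norm_tan_of_abs_re_le_pi_div_four {z : ℂ} (hz : |z.re| ≤ π / 4) :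
    |Real.tan z.re| ≤ ‖Complex.tan z‖ := by
  have cos_pos : 0 < Real.cos z.re :=
    Real.cos_pos_of_mem_Ioo (abs_lt.1 (hz.trans_lt (by linarith [Real.pi_pos])))
  have sin_sq_le := sin_sq_le_cos_sq_of_abs_le_pi_div_four hz
  refine abs_le_of_sq_le_sq ?_ (norm_nonneg _)
  rw [norm_tan_sq, Real.tan_eq_sin_div_cos, div_pow,
    div_le_div_iff₀ (by positivity) (by positivity)]
  linarith [mul_le_mul_of_nonneg_right sin_sq_le (sq_nonneg (Real.sinh z.im))]

theorem abs_re_le_arctan_norm_tan_of_abs_re_le_pi_div_four {z : ℂ} (hz : |z.re| ≤ π / 4) :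
    |z.re| ≤ Real.arctan ‖Complex.tan z‖ := by
  obtain ⟨neg_le_tan, tan_le⟩ := abs_le.1 (abs_tan_re_le_norm_tan_of_abs_re_le_pi_div_four hz)
  obtain ⟨hre_ge, hre_le⟩ := abs_le.1 hz
  have arctan_tan : Real.arctan (Real.tan z.re) = z.re :=
    Real.arctan_tan (by linarith [Real.pi_pos]) (by linarith [Real.pi_pos])
  rw [← arctan_tan, abs_le, ← Real.arctan_neg]
  exact ⟨Real.arctan_mono neg_le_tan, Real.arctan_mono tan_le⟩

theorem differentiableAt_tan_of_abs_re_lt_pi_div_two {z : ℂ} (hz : |z.re| < π / 2) :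
    DifferentiableAt ℂ Complex.tan z := by
  have cos_pos : 0 < Real.cos z.re := Real.cos_pos_of_mem_Ioo (abs_lt.1 hz)
  rw [Complex.differentiableAt_tan, ← norm_ne_zero_iff, ← sq_eq_zero_iff.ne, norm_cos_sq]
  positivity

theorem abs_re_le_arctan_dist_div_of_differentiableOn {V : Type*} [NormedAddCommGroup V]
    [NormedSpace ℂ V] {F : V → ℂ} {c z : V} {R : ℝ} (hF : DifferentiableOn ℂ F (ball c R))
    (hF_strip : ∀ w ∈ ball c R, |(F w).re| ≤ π / 4) (hFc_re : (F c).re = 0) (hz : z ∈ ball c R) :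
    |(F z).re| ≤ Real.arctan (dist z c / R) := by
  wlog hFc : F c = 0 generalizing F
  · simpa [hFc_re] using this (hF.sub_const (F c)) (by simpa [hFc_re] using hF_strip)
      (by simp) (sub_self _)
  have tan_differentiable : DifferentiableOn ℂ (Complex.tan ∘ F) (ball c R) := by
    intro w hw
    have re_lt : |(F w).re| < π / 2 := (hF_strip w hw).trans_lt (by linarith [Real.pi_pos])
    exact (differentiableAt_tan_of_abs_re_lt_pi_div_two re_lt).comp_differentiableWithinAt w
      (hF w hw)
  have tan_mapsTo : MapsTo (Complex.tan ∘ F) (ball c R) (closedBall ((Complex.tan ∘ F) c) 1) :=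
    fun w hw ↦ by
      simpa [hFc] using norm_tan_le_one_of_abs_re_le_pi_div_four (hF_strip w hw)
  have norm_tan_le : ‖Complex.tan (F z)‖ ≤ dist z c / R := by
    simpa [hFc, div_eq_inv_mul] using
      Complex.dist_le_div_mul_dist_of_mapsTo_ball tan_differentiable tan_mapsTo hz
  exact (abs_re_le_arctan_norm_tan_of_abs_re_le_pi_div_four (hF_strip z hz)).trans
    (Real.arctan_mono norm_tan_le)

theorem abs_le_arctan_dist_div_of_harmonicOnNhd {u : ℂ → ℝ} {c z : ℂ} {R : ℝ}
    (hu : HarmonicOnNhd u (ball c R)) (hu_le : ∀ w ∈ ball c R, |u w| ≤ π / 4) (huc : u c = 0)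
    (hz : z ∈ ball c R) : |u z| ≤ Real.arctan (dist z c / R) := by
  obtain ⟨F, hF, re_F_eq : ∀ w ∈ ball c R, (F w).re = u w⟩ := hu.exists_analyticOnNhd_ball_re_eq
  have hc : c ∈ ball c R := mem_ball_self (pos_of_mem_ball hz)
  rw [← re_F_eq z hz]
  exact abs_re_le_arctan_dist_div_of_differentiableOn hF.differentiableOn
    (fun w hw ↦ (re_F_eq w hw).symm ▸ hu_le w hw) ((re_F_eq c hc).trans huc) hz

theorem harmonicOnNhd_of_fderiv_fderiv_add_eq_zero {E : Type*} [NormedAddCommGroup E]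
    [NormedSpace ℝ E] {f : ℂ → E} {s : Set ℂ} (hs : IsOpen s) (hf : ContDiffOn ℝ 2 f s)
    (hf_laplace : ∀ z ∈ s,
      fderiv ℝ (fun w ↦ fderiv ℝ f w 1) z 1 + fderiv ℝ (fun w ↦ fderiv ℝ f w I) z I = 0) :
    HarmonicOnNhd f s := by
  intro z hz
  refine ⟨hf.contDiffAt (hs.mem_nhds hz), ?_⟩
  filter_upwards [hs.mem_nhds hz] with w hw
  have fderiv_differentiable : DifferentiableAt ℝ (fderiv ℝ f) w :=
    ((hf.contDiffAt (hs.mem_nhds hw)).fderiv_right (m := 1) (by norm_num)).differentiableAt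
      one_ne_zero
  have second_partial (v : ℂ) :
      fderiv ℝ (fun w ↦ fderiv ℝ f w v) w v = fderiv ℝ (fderiv ℝ f) w v v := by
    simp [fderiv_clm_apply fderiv_differentiable (differentiableAt_const v)]
  simpa [InnerProductSpace.laplacian_eq_iteratedFDeriv_complexPlane, iteratedFDeriv_two_apply,
    second_partial] using hf_laplace w hw

theorem harmonicOnNhd_of_re_of_im {V : Type*} [NormedAddCommGroup V] [InnerProductSpace ℝ V]
    [FiniteDimensional ℝ V] {f : V → ℂ} {s : Set V}
    (hre : HarmonicOnNhd (fun z ↦ (f z).re) s) (him : HarmonicOnNhd (fun z ↦ (f z).im) s) :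
    HarmonicOnNhd f s := by
  convert (hre.comp_CLM Complex.ofRealCLM).add
    (him.comp_CLM (Complex.ofRealCLM.smulRight Complex.I)) using 1
  ext z
  simp

theorem harmonic_schwarz_lemma_general {E : Type*} [NormedAddCommGroup E] [NormedSpace ℝ E]
    {f : ℂ → E} {c z : ℂ} {R M : ℝ} (hf : HarmonicOnNhd f (ball c R))
    (hf_maps : MapsTo f (ball c R) (closedBall (f c) M)) (hz : z ∈ ball c R) :
    dist (f z) (f c) ≤ 4 * M / π * Real.arctan (dist z c / R) := by
  obtain hM | hM := (nonempty_closedBall.1 ⟨_, hf_maps hz⟩).eq_or_lt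
  · simpa [← hM] using hf_maps hz
  obtain ⟨g, hg_norm, hg_apply⟩ := exists_dual_vector'' ℝ (f z - f c)
  let u : ℂ → ℝ := (π / (4 * M)) • (g ∘ (f - fun _ ↦ f c))
  have u_apply (w : ℂ) : u w = π / (4 * M) * g (f w - f c) := rfl
  have hu : HarmonicOnNhd u (ball c R) :=
    ((hf.sub (InnerProductSpace.harmonicOnNhd_const (f c))).comp_CLM g).const_smul
  have hu_le : ∀ w ∈ ball c R, |u w| ≤ π / 4 := fun w hw ↦
    calc |u w| = π / (4 * M) * |g (f w - f c)| := by
          rw [u_apply, abs_mul, abs_of_pos (by positivity)]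
      _ ≤ π / (4 * M) * M := by
          gcongr
          exact (g.le_of_opNorm_le hg_norm _).trans (by simpa [dist_eq_norm] using hf_maps hw)
      _ = π / 4 := by field_simp
  calc dist (f z) (f c) = 4 * M / π * u z := by
        rw [u_apply, hg_apply, dist_eq_norm, RCLike.ofReal_real_eq_id, id]
        field_simp
    _ ≤ 4 * M / π * Real.arctan (dist z c / R) := by
        gcongr
        exact (le_abs_self _).trans
          (abs_le_arctan_dist_div_of_harmonicOnNhd hu hu_le (by simp [u_apply]) hz)

/-- **Schwarz lemma for complex-valued harmonic functions** (Heinz). If `f` is a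
harmonic function of the unit disk into itself with `f(0) = 0`, then
`|f(z)| ≤ (4/π) arctan |z|`. -/
theorem harmonic_schwarz_lemma
    (f : ℂ → ℂ)
    (hf_smooth : ContDiffOn ℝ 2 f (ball (0 : ℂ) 1))
    (hf_harm_re : ∀ z ∈ ball (0 : ℂ) 1,
      fderiv ℝ (fun w => fderiv ℝ (fun u => (f u).re) w 1) z 1
        + fderiv ℝ (fun w => fderiv ℝ (fun u => (f u).re) w Complex.I) z Complex.I = 0)
    (hf_harm_im : ∀ z ∈ ball (0 : ℂ) 1,
      fderiv ℝ (fun w => fderiv ℝ (fun u => (f u).im) w 1) z 1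
        + fderiv ℝ (fun w => fderiv ℝ (fun u => (f u).im) w Complex.I) z Complex.I = 0)
    (hf_range : ∀ z ∈ ball (0 : ℂ) 1, f z ∈ ball (0 : ℂ) 1)
    (hf0 : f 0 = 0) :
    ∀ z ∈ ball (0 : ℂ) 1, ‖f z‖ ≤ (4 / π) * Real.arctan ‖z‖ := by
  intro z hz
  have hf : HarmonicOnNhd f (ball 0 1) := harmonicOnNhd_of_re_of_im
    (harmonicOnNhd_of_fderiv_fderiv_add_eq_zero isOpen_ball
      (Complex.reCLM.contDiff.comp_contDiffOn hf_smooth) hf_harm_re)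
    (harmonicOnNhd_of_fderiv_fderiv_add_eq_zero isOpen_ball
      (Complex.imCLM.contDiff.comp_contDiffOn hf_smooth) hf_harm_im)
  have hf_maps : MapsTo f (ball 0 1) (closedBall (f 0) 1) := fun w hw ↦
    ball_subset_closedBall (hf0.symm ▸ hf_range w hw)
  simpa [hf0] using harmonic_schwarz_lemma_general hf hf_maps hz
end

section
/- For every complex number b with |b| < 1, the following inequality holds: (1 - |b|²)/|1 - b²| ≤ 1 - (4/π²) · (arg((1 + b)/(1 - b)))², where arg denotes the principal argument (note that (1+b)/(1-b) has positive real part, so its principal argument lies in (-π/2, π/2)). -/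
open Complex Real

/-!
The left-hand side is the cosine of `θ = arg ((1 + b) / (1 - b))`, and `|θ| ≤ π / 2` because the
quotient lies in the right half-plane. It remains to see that `cos θ ≤ 1 - 4 θ² / π²` for such `θ`.
By `1 - cos θ = 2 sin² (θ / 2)` this says that the graph of the sine lies above its chord from `0`
to `π / 4`, which is concavity.
-/

section Trigonometric

variable {c x : ℝ}

lemma mul_sin_le_sin_mul (hc₀ : 0 ≤ c) (hc₁ : c ≤ 1) (hx₀ : 0 ≤ x) (hxπ : x ≤ π) :
    c * Real.sin x ≤ Real.sin (c * x) := by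
  simpa using strictConcaveOn_sin_Icc.concaveOn.2 ⟨le_rfl, pi_nonneg⟩ ⟨hx₀, hxπ⟩
    (sub_nonneg.2 hc₁) hc₀ (sub_add_cancel 1 c)

lemma one_sub_cos_eq_two_mul_sin_half_sq (x : ℝ) :
    1 - Real.cos x = 2 * Real.sin (x / 2) ^ 2 := by
  rw [Real.sin_sq_eq_half_sub, mul_div_cancel₀ x two_ne_zero]
  ring

lemma sq_mul_one_sub_cos_le_one_sub_cos_mul (hc : |c| ≤ 1) (hx : |x| ≤ 2 * π) :
    c ^ 2 * (1 - Real.cos x) ≤ 1 - Real.cos (c * x) := by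
  have hx_half : |x| / 2 ≤ π := by linarith
  have chord_le : |c| * Real.sin (|x| / 2) ≤ Real.sin (|c| * (|x| / 2)) :=
    mul_sin_le_sin_mul (abs_nonneg c) hc (by positivity) hx_half
  have sin_half_nonneg : 0 ≤ Real.sin (|x| / 2) :=
    Real.sin_nonneg_of_nonneg_of_le_pi (by positivity) hx_half
  calc c ^ 2 * (1 - Real.cos x)
      = 2 * (|c| * Real.sin (|x| / 2)) ^ 2 := by
        rw [← Real.cos_abs x, one_sub_cos_eq_two_mul_sin_half_sq, mul_pow, sq_abs]
        ring
    _ ≤ 2 * Real.sin (|c| * (|x| / 2)) ^ 2 := by gcongr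
    _ = 1 - Real.cos (c * x) := by
        rw [← Real.cos_abs (c * x), one_sub_cos_eq_two_mul_sin_half_sq, abs_mul, mul_div_assoc]

lemma cos_le_one_sub_four_div_pi_sq_mul_sq (hx : |x| ≤ π / 2) :
    Real.cos x ≤ 1 - 4 / π ^ 2 * x ^ 2 := by
  have scale_le_one : |x / (π / 2)| ≤ 1 := by
    rw [abs_div, abs_of_pos pi_div_two_pos]
    exact div_le_one_of_le₀ hx pi_div_two_pos.le
  have right_angle_le : |π / 2| ≤ 2 * π := by
    rw [abs_of_pos pi_div_two_pos]
    linarith [pi_pos]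
  have sq_scale_le := sq_mul_one_sub_cos_le_one_sub_cos_mul scale_le_one right_angle_le
  rw [Real.cos_pi_div_two, sub_zero, mul_one, div_mul_cancel₀ x pi_div_two_pos.ne'] at sq_scale_le
  have sq_scale : (x / (π / 2)) ^ 2 = 4 / π ^ 2 * x ^ 2 := by
    field_simp
    norm_num
  linarith

end Trigonometric

section Complex

lemma re_div_norm_le_one_sub_four_div_pi_sq_mul_arg_sq {z : ℂ} (hz : z ≠ 0) (hre : 0 ≤ z.re) :
    z.re / ‖z‖ ≤ 1 - 4 / π ^ 2 * arg z ^ 2 := by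
  rw [← cos_arg hz]
  exact cos_le_one_sub_four_div_pi_sq_mul_sq (abs_arg_le_pi_div_two_iff.2 hre)

variable (a b : ℂ)

lemma re_add_div_sub : ((a + b) / (a - b)).re = (‖a‖ ^ 2 - ‖b‖ ^ 2) / ‖a - b‖ ^ 2 := by
  simp only [div_re, ← add_div, ← normSq_eq_norm_sq]
  congr 1
  simp only [normSq_apply, add_re, sub_re, add_im, sub_im]
  ring

lemma re_div_norm_add_div_sub :
    ((a + b) / (a - b)).re / ‖(a + b) / (a - b)‖ = (‖a‖ ^ 2 - ‖b‖ ^ 2) / ‖a ^ 2 - b ^ 2‖ := by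
  rcases eq_or_ne (a - b) 0 with hsub | hsub
  · simp [sq_sub_sq a b, hsub]
  · have norm_sub_ne_zero : ‖a - b‖ ≠ 0 := norm_ne_zero_iff.2 hsub
    rw [re_add_div_sub, norm_div, sq_sub_sq a b, norm_mul]
    field_simp

end Complex

/-- For `|b| < 1` one has `(1 - |b|²)/|1 - b²| ≤ 1 - (4/π²) (arg((1+b)/(1-b)))²`,
where the principal argument of `(1+b)/(1-b)` lies in `(-π/2, π/2)`. -/
theorem mobius_arg_inequality
    (b : ℂ) (hb : ‖b‖ < 1) :
    (1 - ‖b‖ ^ 2) / ‖1 - b ^ 2‖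
      ≤ 1 - (4 / π ^ 2) * (Complex.arg ((1 + b) / (1 - b))) ^ 2 := by
  have re_pos : 0 < ((1 + b) / (1 - b)).re := by
    have one_sub_ne_zero : 1 - b ≠ 0 := sub_ne_zero.2 fun h => by simp [← h] at hb
    have norm_sq_lt_one : ‖b‖ ^ 2 < 1 := pow_lt_one₀ (norm_nonneg b) hb two_ne_zero
    rw [re_add_div_sub, norm_one, one_pow]
    exact div_pos (sub_pos.2 norm_sq_lt_one) (by positivity)
  have quotient_ne_zero : (1 + b) / (1 - b) ≠ 0 := fun h => by simp [h] at re_pos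
  calc (1 - ‖b‖ ^ 2) / ‖1 - b ^ 2‖
      = ((1 + b) / (1 - b)).re / ‖(1 + b) / (1 - b)‖ := by
        rw [re_div_norm_add_div_sub, norm_one, one_pow, one_pow]
    _ ≤ 1 - 4 / π ^ 2 * arg ((1 + b) / (1 - b)) ^ 2 :=
        re_div_norm_le_one_sub_four_div_pi_sq_mul_arg_sq quotient_ne_zero re_pos.le
end

section
/- Define f : U → ℝ on the open unit disk U = {(x,y) ∈ ℝ² : x² + y² < 1} by f(x, y) = (2/π) · arctan(2y / (1 - x² - y²)). Then f is harmonic on U, maps U into the open interval (-1, 1), satisfies f(0) = 0, and its gradient at the origin satisfies |∇f(0)| = 4/π; in particular equality holds in the bound |∇f(0)| ≤ (4/π)·(1 - f(0)²)/(1 - 0²). -/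
open Complex Metric Real

/-!
On the right half-plane `arg w = arctan (Im w / Re w)`. Applied to the Cayley transform
`w = (1 + z) / (1 - z)`, which maps the unit disk into the right half-plane and satisfies
`Im w / Re w = 2 y / (1 - x² - y²)`, this exhibits the extremal function as the imaginary part of
the holomorphic function `F z = (2 / π) log ((1 + z) / (1 - z))`. Hence it is harmonic, and its
gradient has norm `|F' z| = (4 / π) / |1 - z²|`.
-/

open InnerProductSpace

open scoped ComplexConjugate Topology

theorem iteratedFDeriv_two_eq_fderiv_fderiv_apply {𝕜 E F : Type*} [NontriviallyNormedField 𝕜]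
    [NormedAddCommGroup E] [NormedSpace 𝕜 E] [NormedAddCommGroup F] [NormedSpace 𝕜 F]
    {f : E → F} {x : E} (hf : ContDiffAt 𝕜 2 f x) (v w : E) :
    iteratedFDeriv 𝕜 2 f x ![v, w] = fderiv 𝕜 (fun y ↦ fderiv 𝕜 f y w) x v := by
  have hdiff : DifferentiableAt 𝕜 (fderiv 𝕜 f) x :=
    (hf.fderiv_right (m := 1) (by norm_num)).differentiableAt one_ne_zero
  simp [iteratedFDeriv_two_apply, fderiv_clm_apply hdiff (differentiableAt_const w)]

theorem fderiv_fderiv_one_add_fderiv_fderiv_I_eq_zero {F : Type*} [NormedAddCommGroup F]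
    [NormedSpace ℝ F] {f : ℂ → F} {z : ℂ} (hf : HarmonicAt f z) :
    fderiv ℝ (fun w ↦ fderiv ℝ f w 1) z 1 + fderiv ℝ (fun w ↦ fderiv ℝ f w I) z I = 0 := by
  rw [← iteratedFDeriv_two_eq_fderiv_fderiv_apply hf.1,
    ← iteratedFDeriv_two_eq_fderiv_fderiv_apply hf.1]
  simpa only [laplacian_eq_iteratedFDeriv_complexPlane, Pi.zero_apply] using hf.2.self_of_nhds

theorem harmonicOnNhd_of_eqOn_im {f : ℂ → ℝ} {g : ℂ → ℂ} {s : Set ℂ} (hs : IsOpen s)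
    (hg : DifferentiableOn ℂ g s) (hfg : s.EqOn f fun z ↦ (g z).im) : HarmonicOnNhd f s :=
  fun _ hz ↦ (harmonicAt_congr_nhds (hfg.eventuallyEq_of_mem (hs.mem_nhds hz))).2
    (hg.analyticOnNhd hs _ hz).harmonicAt_im

theorem hasGradientAt_im_of_hasDerivAt {g : ℂ → ℂ} {g' z : ℂ} (hg : HasDerivAt g g' z) :
    HasGradientAt (fun w ↦ (g w).im) (I * conj g') z := by
  rw [hasGradientAt_iff_hasFDerivAt]
  refine (imCLM.hasFDerivAt.comp z hg.complexToReal_fderiv).congr_fderiv ?_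
  ext
  simp [Complex.inner, mul_comm]

theorem norm_gradient_eq_norm_of_eventuallyEq_im {f : ℂ → ℝ} {g : ℂ → ℂ} {g' z : ℂ}
    (hg : HasDerivAt g g' z) (hfg : f =ᶠ[𝓝 z] fun w ↦ (g w).im) : ‖gradient f z‖ = ‖g'‖ := by
  rw [((hasGradientAt_im_of_hasDerivAt hg).congr_of_eventuallyEq hfg).gradient, norm_mul, norm_I,
    one_mul, RCLike.norm_conj]

theorem arg_eq_arctan_im_div_re {w : ℂ} (hw : 0 < w.re) : arg w = Real.arctan (w.im / w.re) :=
  (Real.arctan_eq_of_tan_eq (tan_arg w)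
    (abs_lt.1 (abs_arg_lt_pi_div_two_iff.2 (Or.inl hw)))).symm

theorem two_div_pi_mul_arctan_mem_Ioo (t : ℝ) :
    2 / π * Real.arctan t ∈ Set.Ioo (-1 : ℝ) 1 := by
  obtain ⟨hlower, hupper⟩ := Real.arctan_mem_Ioo t
  rw [div_mul_eq_mul_div]
  constructor
  · rw [lt_div_iff₀ pi_pos]
    linarith
  · rw [div_lt_iff₀ pi_pos]
    linarith

theorem ne_one_of_norm_lt_one {R : Type*} [SeminormedRing R] [NormOneClass R] {a : R}
    (ha : ‖a‖ < 1) : a ≠ 1 := by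
  rintro rfl
  simp at ha

/-- The Cayley transform `z ↦ (1 + z) / (1 - z)`, mapping the unit disk onto the right half-plane.
At its pole `z = 1` it takes the junk value `0`. -/
noncomputable def cayley (z : ℂ) : ℂ := (1 + z) / (1 - z)

section Cayley

variable {z : ℂ}

theorem cayley_re (z : ℂ) : (cayley z).re = (1 - z.re ^ 2 - z.im ^ 2) / normSq (1 - z) := by
  rw [cayley, div_re, ← add_div]
  simp only [add_re, sub_re, one_re, add_im, sub_im, one_im]
  ring

theorem cayley_im (z : ℂ) : (cayley z).im = 2 * z.im / normSq (1 - z) := by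
  rw [cayley, div_im, ← sub_div]
  simp only [add_re, sub_re, one_re, add_im, sub_im, one_im]
  ring

theorem cayley_im_div_re (hz : z ≠ 1) :
    (cayley z).im / (cayley z).re = 2 * z.im / (1 - z.re ^ 2 - z.im ^ 2) := by
  rw [cayley_im, cayley_re, div_div_div_cancel_right₀]
  exact normSq_eq_zero.not.2 (sub_ne_zero.2 hz.symm)

theorem cayley_re_pos (hz : ‖z‖ < 1) : 0 < (cayley z).re := by
  have hnum : 0 < 1 - z.re ^ 2 - z.im ^ 2 := by
    have hsq : ‖z‖ ^ 2 = z.re ^ 2 + z.im ^ 2 := by rw [Complex.sq_norm, normSq_apply]; ring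
    linarith [pow_lt_one₀ (norm_nonneg z) hz two_ne_zero]
  rw [cayley_re]
  exact div_pos hnum (normSq_pos.2 (sub_ne_zero.2 (ne_one_of_norm_lt_one hz).symm))

theorem hasDerivAt_cayley (hz : z ≠ 1) : HasDerivAt cayley (2 / (1 - z) ^ 2) z := by
  refine (((hasDerivAt_id z).const_add 1).div ((hasDerivAt_id z).const_sub 1)
    (sub_ne_zero.2 hz.symm)).congr_deriv ?_
  simp only [id]
  ring

end Cayley

/-- The holomorphic map `z ↦ (2 / π) log ((1 + z) / (1 - z))` of the unit disk onto the strip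
`|Im w| < 1`, with the principal branch of the logarithm. -/
noncomputable def diskToStrip (z : ℂ) : ℂ := (2 / π : ℝ) * Complex.log (cayley z)

section DiskToStrip

variable {z : ℂ}

theorem hasDerivAt_diskToStrip (hz : ‖z‖ < 1) :
    HasDerivAt diskToStrip ((4 / π : ℝ) / (1 - z ^ 2)) z := by
  have hsub : 1 - z ≠ 0 := sub_ne_zero.2 (ne_one_of_norm_lt_one hz).symm
  have hadd : 1 + z ≠ 0 := by
    simpa using sub_ne_zero.2 (ne_one_of_norm_lt_one ((norm_neg z).trans_lt hz)).symm
  have hfactor : 1 - z ^ 2 = (1 + z) * (1 - z) := by ring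
  refine (((hasDerivAt_cayley (ne_one_of_norm_lt_one hz)).clog
    (Or.inl (cayley_re_pos hz))).const_mul _).congr_deriv ?_
  rw [cayley, hfactor]
  push_cast
  field_simp
  norm_num

theorem diskToStrip_im (hz : ‖z‖ < 1) :
    (diskToStrip z).im = 2 / π * Real.arctan (2 * z.im / (1 - z.re ^ 2 - z.im ^ 2)) := by
  rw [diskToStrip, im_ofReal_mul, log_im, arg_eq_arctan_im_div_re (cayley_re_pos hz),
    cayley_im_div_re (ne_one_of_norm_lt_one hz)]

end DiskToStrip

/-- **Sharpness of the harmonic Schwarz gradient bound** (Kalaj–Vuorinen).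
The function `f(x,y) = (2/π) arctan (2y/(1 - x² - y²))` is harmonic on the unit
disk, maps it into `(-1, 1)`, vanishes at the origin, and satisfies
`|∇f(0)| = 4/π = (4/π)(1 - f(0)²)/(1 - 0²)`. -/
theorem extremal_harmonic_function :
    ∀ f : ℂ → ℝ,
      (∀ z, f z = (2 / π) * Real.arctan (2 * z.im / (1 - z.re ^ 2 - z.im ^ 2))) →
      ContDiffOn ℝ 2 f (ball (0 : ℂ) 1)
      ∧ (∀ z ∈ ball (0 : ℂ) 1,
          fderiv ℝ (fun w => fderiv ℝ f w 1) z 1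
            + fderiv ℝ (fun w => fderiv ℝ f w Complex.I) z Complex.I = 0)
      ∧ (∀ z ∈ ball (0 : ℂ) 1, f z ∈ Set.Ioo (-1 : ℝ) 1)
      ∧ f 0 = 0
      ∧ ‖gradient f 0‖ = 4 / π
      ∧ ‖gradient f 0‖ = (4 / π) * (1 - (f 0) ^ 2) / (1 - ‖(0 : ℂ)‖ ^ 2) := by
  intro f hf
  have hderiv : ∀ z ∈ ball (0 : ℂ) 1, HasDerivAt diskToStrip ((4 / π : ℝ) / (1 - z ^ 2)) z :=
    fun z hz ↦ hasDerivAt_diskToStrip (mem_ball_zero_iff.1 hz)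
  have him : (ball (0 : ℂ) 1).EqOn f fun z ↦ (diskToStrip z).im :=
    fun z hz ↦ (hf z).trans (diskToStrip_im (mem_ball_zero_iff.1 hz)).symm
  have hharm : HarmonicOnNhd f (ball 0 1) := harmonicOnNhd_of_eqOn_im isOpen_ball
    (fun z hz ↦ (hderiv z hz).differentiableAt.differentiableWithinAt) him
  have hzero : f 0 = 0 := by simp [hf]
  have hgrad : ‖gradient f 0‖ = 4 / π := by
    rw [norm_gradient_eq_norm_of_eventuallyEq_im (hderiv 0 (mem_ball_self one_pos))
      (him.eventuallyEq_of_mem (ball_mem_nhds 0 one_pos))]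
    simp [abs_of_pos pi_pos]
  exact ⟨hharm.contDiffOn,
    fun z hz ↦ fderiv_fderiv_one_add_fderiv_fderiv_I_eq_zero (hharm z hz),
    fun z _ ↦ hf z ▸ two_div_pi_mul_arctan_mem_Ioo _, hzero, hgrad, by simp [hgrad, hzero]⟩
end
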